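/- There exist a constant C > 0, a real number x₀, and for each real x ≥ x₀ a set E(x) of positive integers at most x, such that #E(x) = o(x) as x → ∞, and for every real x ≥ x₀ and every positive integer d satisfying d > x^{1/(2 log log log x)} and P⁻(d) > log log x, the number of integers n with 1 ≤ n ≤ x, n ∉ E(x), and d ∣ s(n) is at most C·x/(d^{1/4} log x). -/

import Mathlib

open scoped Classical
open Filter Finset

/-- `sigma1 n` is `σ(n)`, the sum of all positive divisors of `n`. -/
def sigma1 (n : ℕ) : ℕ := ArithmeticFunction.sigma 1 n

/-- `s n` is the sum of the proper divisors of `n`, i.e. `σ(n) − n`. -/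
def s (n : ℕ) : ℕ := sigma1 n - n

/-!
Outside a set of density zero, every `n ≤ x` exceeds `x / log x`, has no divisor `m²` with
`m > log x`, no prime factors `p`, `q` with `p > (log x)⁶` and `p ∣ q + 1`, and a small
`(log x)⁶`-smooth part. For such `n` with `d ∣ s n`, put `D = d ^ (1 / 4) * log x` and write
`n = a * b`, where `a > D` is a minimal divisor without prime factors up to `(log x)⁶`. Then `a` is
odd, squarefree and coprime to `b`, and `gcd (b, σ b)` is small because every common prime factor of
`n` and `σ n` is at most `(log x)⁶`.

Two such `n = a * b` and `n' = a' * b` sharing the cofactor `b` satisfy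
`a * s a' ≡ a' * s a` modulo `d / gcd (d, gcd (b, σ b))`: eliminate `s b` and `σ b` from
`s (a * b) = a * s b + s a * σ b`. If `a` and `a'` are composite, minimality makes `a`, `s a`, `a'`
and `s a'` so small that the congruence is an equality, and an odd squarefree number `a` is
determined by `s a / a`. If they are primes then `s a = s a' = 1`, so `a ≡ a'`. Summing over
`b ≤ x / D` gives the bound.
-/

theorem sum_Icc_inv_le_one_add_log {N : ℕ} {x : ℝ} (hx : 1 ≤ x) (hN : N ≤ x) :
    ∑ k ∈ Icc 1 N, (k : ℝ)⁻¹ ≤ 1 + Real.log x := by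
  have hmono : Icc 1 N ⊆ Icc 1 ⌊x⌋₊ := Icc_subset_Icc_right (Nat.le_floor hN)
  calc ∑ k ∈ Icc 1 N, (k : ℝ)⁻¹ ≤ ∑ k ∈ Icc 1 ⌊x⌋₊, (k : ℝ)⁻¹ :=
        sum_le_sum_of_subset_of_nonneg hmono fun _ _ _ => by positivity
    _ = (harmonic ⌊x⌋₊ : ℝ) := by rw [harmonic_eq_sum_Icc]; push_cast; rfl
    _ ≤ 1 + Real.log x := harmonic_floor_le_one_add_log x hx

theorem sum_Ioc_floor_inv_sq_le {w : ℝ} (hw : 1 ≤ w) (N : ℕ) :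
    ∑ i ∈ Ioc ⌊w⌋₊ N, ((i : ℝ) ^ 2)⁻¹ ≤ 2 / w := by
  have hfloor : 1 ≤ ⌊w⌋₊ := (Nat.one_le_floor_iff w).2 hw
  have hfloor_inv : (⌊w⌋₊ : ℝ)⁻¹ ≤ 2 / w := by
    have hone : (1 : ℝ) ≤ ⌊w⌋₊ := by exact_mod_cast hfloor
    have hlt := Nat.lt_floor_add_one w
    rw [inv_eq_one_div, div_le_div_iff₀ (by linarith) (by linarith)]
    linarith
  rcases le_total ⌊w⌋₊ N with h | h
  · have htail := sum_Ioc_inv_sq_le_sub (α := ℝ) (Nat.one_le_iff_ne_zero.1 hfloor) h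
    have hN : (0 : ℝ) ≤ (N : ℝ)⁻¹ := by positivity
    linarith
  · rw [Ioc_eq_empty_of_le h, sum_empty]
    positivity

theorem card_primeFactors_le_two_mul_log (a : ℕ) :
    (#a.primeFactors : ℝ) ≤ 2 * Real.log a := by
  rcases eq_or_ne a 0 with rfl | ha
  · simp
  have hpow : (2 : ℝ) ^ #a.primeFactors ≤ a := by
    have hprod : 2 ^ #a.primeFactors ≤ ∏ p ∈ a.primeFactors, p :=
      pow_card_le_prod _ _ _ fun p hp => (Nat.prime_of_mem_primeFactors hp).two_le
    exact_mod_cast hprod.trans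
      (Nat.le_of_dvd (Nat.pos_of_ne_zero ha) (Nat.prod_primeFactors_dvd a))
  have hlog := Real.log_le_log (by positivity) hpow
  rw [Real.log_pow] at hlog
  nlinarith [Real.log_two_gt_d9, (#a.primeFactors).cast_nonneg (α := ℝ)]

/-! ### The divisor sums `σ` and `s` -/

theorem sigma1_eq_sum (n : ℕ) : sigma1 n = ∑ e ∈ n.divisors, e :=
  ArithmeticFunction.sigma_one_apply n

theorem sigma1_mul_of_coprime {a b : ℕ} (h : a.Coprime b) :
    sigma1 (a * b) = sigma1 a * sigma1 b :=
  ArithmeticFunction.isMultiplicative_sigma.map_mul_of_coprime h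

theorem sigma1_prime {p : ℕ} (hp : p.Prime) : sigma1 p = p + 1 := by
  rw [sigma1_eq_sum, hp.sum_divisors]

theorem sigma1_eq_properDivisors_add_self (n : ℕ) :
    sigma1 n = ∑ e ∈ n.properDivisors, e + n := by
  rw [sigma1_eq_sum, Nat.sum_divisors_eq_sum_properDivisors_add_self]

theorem s_eq_sum_properDivisors (n : ℕ) : s n = ∑ e ∈ n.properDivisors, e := by
  rw [s, sigma1_eq_properDivisors_add_self, Nat.add_sub_cancel]

theorem s_add_self (n : ℕ) : s n + n = sigma1 n := by
  rw [s_eq_sum_properDivisors, ← sigma1_eq_properDivisors_add_self]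

theorem s_pos {n : ℕ} (h : 1 < n) : 0 < s n := by
  rw [s_eq_sum_properDivisors]
  exact sum_pos (fun e he => Nat.pos_of_mem_properDivisors he)
    ⟨1, Nat.one_mem_properDivisors_iff_one_lt.2 h⟩

theorem s_prime {p : ℕ} (hp : p.Prime) : s p = 1 := by
  rw [s_eq_sum_properDivisors, hp.sum_properDivisors]

theorem s_mul_of_coprime {a b : ℕ} (h : a.Coprime b) :
    s (a * b) = a * s b + s a * sigma1 b := by
  have hab := s_add_self (a * b)
  rw [sigma1_mul_of_coprime h, ← s_add_self a, ← s_add_self b] at hab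
  rw [← s_add_self b]
  linarith

theorem sigma1_le_mul_one_add_log (n : ℕ) : (sigma1 n : ℝ) ≤ n * (1 + Real.log n) := by
  rcases eq_or_ne n 0 with rfl | hn
  · simp [sigma1]
  have hsub : n.divisors ⊆ Icc 1 n := fun e he =>
    mem_Icc.2 ⟨Nat.pos_of_mem_divisors he, Nat.divisor_le he⟩
  calc (sigma1 n : ℝ) = ∑ e ∈ n.divisors, ((n / e : ℕ) : ℝ) := by
        rw [sigma1_eq_sum, ← Nat.sum_div_divisors n fun e => e, Nat.cast_sum]
    _ ≤ ∑ e ∈ n.divisors, (n : ℝ) * (e : ℝ)⁻¹ :=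
        sum_le_sum fun e _ => Nat.cast_div_le.trans_eq (div_eq_mul_inv _ _)
    _ ≤ ∑ e ∈ Icc 1 n, (n : ℝ) * (e : ℝ)⁻¹ :=
        sum_le_sum_of_subset_of_nonneg hsub fun _ _ _ => by positivity
    _ = n * ∑ e ∈ Icc 1 n, (e : ℝ)⁻¹ := by rw [mul_sum]
    _ ≤ n * (1 + Real.log n) := by
        gcongr
        exact sum_Icc_inv_le_one_add_log (by exact_mod_cast Nat.one_le_iff_ne_zero.2 hn) le_rfl

theorem s_le_sum_sigma1_div (a : ℕ) : s a ≤ ∑ p ∈ a.primeFactors, sigma1 (a / p) := by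
  have hcover : ∀ e ∈ a.properDivisors, ∃ p ∈ a.primeFactors, e ∈ (a / p).divisors := by
    intro e he
    obtain ⟨⟨k, rfl⟩, hlt⟩ := Nat.mem_properDivisors.1 he
    have he0 : e * k ≠ 0 := by omega
    obtain ⟨p, hp, m, rfl⟩ := Nat.exists_prime_and_dvd (n := k) (by rintro rfl; omega)
    have hdiv : e * (p * m) / p = e * m := by
      rw [mul_left_comm, Nat.mul_div_cancel_left _ hp.pos]
    refine ⟨p, Nat.mem_primeFactors.2 ⟨hp, ⟨e * m, mul_left_comm e p m⟩, he0⟩, ?_⟩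
    rw [hdiv, Nat.mem_divisors]
    exact ⟨dvd_mul_right e m, left_ne_zero_of_mul (b := p) (by rwa [mul_assoc, mul_comm m])⟩
  calc s a = ∑ e ∈ a.properDivisors, e := s_eq_sum_properDivisors a
    _ ≤ ∑ e ∈ a.properDivisors, ∑ p ∈ a.primeFactors with e ∈ (a / p).divisors, e := by
        refine sum_le_sum fun e he => ?_
        obtain ⟨p, hp, hep⟩ := hcover e he
        exact single_le_sum (f := fun _ => e) (fun _ _ => Nat.zero_le e)
          (mem_filter.2 ⟨hp, hep⟩)
    _ ≤ ∑ p ∈ a.primeFactors, ∑ e ∈ (a / p).divisors, e := by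
        rw [sum_comm' (t' := a.primeFactors)
          (s' := fun p => {e ∈ a.properDivisors | e ∈ (a / p).divisors})
          (by simp only [mem_filter]; tauto)]
        exact sum_le_sum fun p _ =>
          sum_le_sum_of_subset fun e he => (mem_filter.1 he).2
    _ = ∑ p ∈ a.primeFactors, sigma1 (a / p) := by simp only [sigma1_eq_sum]

theorem exists_prime_dvd_sigma1_ordProj {n p : ℕ} (hn : n ≠ 0) (hp : p.Prime)
    (h : p ∣ sigma1 n) : ∃ q, q.Prime ∧ q ∣ n ∧ p ∣ sigma1 (q ^ n.factorization q) := by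
  rw [sigma1, ArithmeticFunction.isMultiplicative_sigma.multiplicative_factorization _ hn,
    Finsupp.prod, hp.prime.dvd_finsetProd_iff] at h
  obtain ⟨q, hq, hdvd⟩ := h
  rw [Nat.support_factorization] at hq
  exact ⟨q, Nat.prime_of_mem_primeFactors hq, Nat.dvd_of_mem_primeFactors hq, hdvd⟩

theorem not_dvd_sigma1_of_forall_prime_le {a p : ℕ} (ha : Squarefree a) (hodd : Odd a)
    (hp : p.Prime) (hmax : ∀ q, q.Prime → q ∣ a → q ≤ p) : ¬ p ∣ sigma1 a := by
  intro hdvd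
  obtain ⟨q, hq, hqa, hpq⟩ := exists_prime_dvd_sigma1_ordProj ha.ne_zero hp hdvd
  have hexp : a.factorization q = 1 :=
    le_antisymm (ha.natFactorization_le_one q) (hq.factorization_pos_of_dvd ha.ne_zero hqa)
  rw [hexp, pow_one, sigma1_prime hq] at hpq
  have hqp : q ≤ p := hmax q hq hqa
  have hqodd : Odd q := hodd.of_dvd_nat hqa
  -- `p ∣ q + 1 ≤ p + 1` forces `p = q + 1`, but `q` and hence `p` would both be odd
  obtain ⟨k, hk⟩ := hpq
  have hk1 : k = 1 := by
    have := hp.two_le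
    have hk2 : k < 2 := by by_contra! h; nlinarith
    interval_cases k <;> omega
  rcases hp.eq_two_or_odd' with rfl | hpodd
  · have := hq.two_le
    omega
  · rw [hk1, mul_one] at hk
    exact Nat.not_even_iff_odd.2 hpodd (hk ▸ hqodd.add_one)

theorem eq_of_mul_sigma1_eq {a a' : ℕ} (ha : Squarefree a) (ha' : Squarefree a')
    (hodd : Odd a) (hodd' : Odd a') (h : a * sigma1 a' = a' * sigma1 a) : a = a' := by
  induction a using Nat.strong_induction_on generalizing a' with
  | _ a ih =>
  by_cases hone : a * a' = 1
  · exact (Nat.eq_one_of_mul_eq_one_right hone).trans (Nat.eq_one_of_mul_eq_one_left hone).symm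
  obtain ⟨p, hpmem, hmax⟩ := exists_max_image (a * a').primeFactors id (by
    rw [Nat.nonempty_primeFactors]
    have := Nat.mul_ne_zero ha.ne_zero ha'.ne_zero
    omega)
  obtain ⟨hp, hpdvd, hne⟩ := Nat.mem_primeFactors.1 hpmem
  have hnot : ¬ p ∣ sigma1 a := not_dvd_sigma1_of_forall_prime_le ha hodd hp fun q hq hqa =>
    hmax q (Nat.mem_primeFactors.2 ⟨hq, hqa.mul_right _, hne⟩)
  have hnot' : ¬ p ∣ sigma1 a' := not_dvd_sigma1_of_forall_prime_le ha' hodd' hp fun q hq hqa =>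
    hmax q (Nat.mem_primeFactors.2 ⟨hq, hqa.mul_left _, hne⟩)
  have hiff : p ∣ a ↔ p ∣ a' :=
    ⟨fun hpa => (hp.dvd_mul.1 (h ▸ hpa.mul_right _)).resolve_right hnot,
      fun hpa' => (hp.dvd_mul.1 (h ▸ hpa'.mul_right _)).resolve_right hnot'⟩
  obtain ⟨m, rfl⟩ : p ∣ a := (hp.dvd_mul.1 hpdvd).elim id hiff.2
  obtain ⟨m', rfl⟩ : p ∣ a' := hiff.1 (dvd_mul_right p m)
  rw [sigma1_mul_of_coprime (Nat.coprime_of_squarefree_mul ha),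
    sigma1_mul_of_coprime (Nat.coprime_of_squarefree_mul ha'), sigma1_prime hp] at h
  have hm : m * sigma1 m' = m' * sigma1 m := by
    apply Nat.eq_of_mul_eq_mul_left (Nat.mul_pos hp.pos p.succ_pos)
    linarith
  have hm0 : 0 < m := Nat.pos_of_ne_zero ha.of_mul_right.ne_zero
  have hlt : m < p * m := by nlinarith [hp.two_le]
  rw [ih m hlt ha.of_mul_right ha'.of_mul_right (Nat.odd_mul.1 hodd).2 (Nat.odd_mul.1 hodd').2 hm]

theorem eq_of_mul_s_eq {a a' : ℕ} (ha : Squarefree a) (ha' : Squarefree a')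
    (hodd : Odd a) (hodd' : Odd a') (h : a * s a' = a' * s a) : a = a' := by
  apply eq_of_mul_sigma1_eq ha ha' hodd hodd'
  rw [← s_add_self, ← s_add_self, mul_add, mul_add, h, mul_comm a a']

/-! ### Two factorizations with a common cofactor -/

theorem mul_s_mul_gcd_modEq {a a' b d : ℕ} (h : a.Coprime b) (h' : a'.Coprime b)
    (hd : d ∣ s (a * b)) (hd' : d ∣ s (a' * b)) :
    a * s a' * b.gcd (sigma1 b) ≡ a' * s a * b.gcd (sigma1 b) [MOD d] := by
  rw [s_mul_of_coprime h, ← Int.natCast_dvd_natCast] at hd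
  rw [s_mul_of_coprime h', ← Int.natCast_dvd_natCast] at hd'
  have hs : (s b : ℤ) = sigma1 b - b := by rw [← s_add_self b]; push_cast; ring
  push_cast [hs] at hd hd'
  have hsigma : (d : ℤ) ∣ (a' * s a - a * s a') * sigma1 b := by
    convert! dvd_sub (hd.mul_left (a' : ℤ)) (hd'.mul_left (a : ℤ)) using 1
    ring
  have hsigma_sub : (d : ℤ) ∣ (a' * s a - a * s a') * (sigma1 b - b) := by
    convert! dvd_sub (hd'.mul_left (s a : ℤ)) (hd.mul_left (s a' : ℤ)) using 1
    ring
  have hb : (d : ℤ) ∣ (a' * s a - a * s a') * b := by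
    convert! dvd_sub hsigma hsigma_sub using 1
    ring
  rw [Nat.modEq_iff_dvd]
  push_cast [Nat.gcd_eq_gcd_ab]
  convert! dvd_add (hb.mul_right (b.gcdA (sigma1 b))) (hsigma.mul_right (b.gcdB (sigma1 b)))
    using 1
  ring

theorem eq_of_dvd_s_mul_of_lt {a a' b d : ℕ} {M N T : ℝ} (hb : 0 < b) (hMNT : M * N * T < d)
    (hgcd : b.gcd (sigma1 b) ≤ T) (hcop : a.Coprime b) (hcop' : a'.Coprime b)
    (hd : d ∣ s (a * b)) (hd' : d ∣ s (a' * b)) (hsq : Squarefree a) (hsq' : Squarefree a')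
    (hodd : Odd a) (hodd' : Odd a') (ha : a ≤ M) (ha' : a' ≤ M) (hs : s a ≤ N) (hs' : s a' ≤ N) :
    a = a' := by
  have hlt : ∀ u v : ℕ, u ≤ M → v ≤ N → u * v * b.gcd (sigma1 b) < d := by
    intro u v hu hv
    have : ((u * v * b.gcd (sigma1 b) : ℕ) : ℝ) < d := by
      have hM : 0 ≤ M := (Nat.cast_nonneg u).trans hu
      have hN : 0 ≤ N := (Nat.cast_nonneg v).trans hv
      push_cast
      exact lt_of_le_of_lt (by gcongr) hMNT
    exact_mod_cast this
  have heq := (mul_s_mul_gcd_modEq hcop hcop' hd hd').eq_of_lt_of_lt (hlt _ _ ha hs')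
    (hlt _ _ ha' hs)
  exact eq_of_mul_s_eq hsq hsq' hodd hodd'
    (Nat.eq_of_mul_eq_mul_right (Nat.gcd_pos_of_pos_left _ hb) heq)

theorem card_le_div_add_one_of_modEq {Q : Finset ℕ} {m X : ℕ}
    (hmod : ∀ p ∈ Q, ∀ q ∈ Q, p ≡ q [MOD m]) (hX : ∀ p ∈ Q, p ≤ X) : #Q ≤ X / m + 1 := by
  rw [← card_range (X / m + 1)]
  refine card_le_card_of_injOn (· / m) (fun p hp => ?_) fun p hp q hq hpq => ?_
  · exact mem_coe.2 (mem_range.2 (Nat.lt_succ_of_le (Nat.div_le_div_right (hX p hp))))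
  · dsimp only at hpq
    rw [← Nat.div_add_mod p m, ← Nat.div_add_mod q m, hpq, hmod p hp q hq]

theorem card_primes_dvd_s_mul_le {b d : ℕ} {x T : ℝ} (hb : 0 < b) (hd : 0 < d) (hx : 0 ≤ x)
    (hgcd : b.gcd (sigma1 b) ≤ T) {Q : Finset ℕ} (hprime : ∀ p ∈ Q, p.Prime)
    (hcop : ∀ p ∈ Q, p.Coprime b) (hdvd : ∀ p ∈ Q, d ∣ s (p * b))
    (hle : ∀ p ∈ Q, ((p * b : ℕ) : ℝ) ≤ x) :
    (#Q : ℝ) ≤ 1 + x * T / d * (b : ℝ)⁻¹ := by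
  set g := b.gcd (sigma1 b)
  set m := d / d.gcd g
  have hgcd_pos : 0 < d.gcd g := Nat.gcd_pos_of_pos_left _ hd
  have hm : 0 < m := Nat.div_pos (Nat.gcd_le_left _ hd) hgcd_pos
  have hmod : ∀ p ∈ Q, ∀ q ∈ Q, p ≡ q [MOD m] := by
    intro p hp q hq
    have hmul := mul_s_mul_gcd_modEq (hcop p hp) (hcop q hq) (hdvd p hp) (hdvd q hq)
    rw [s_prime (hprime p hp), s_prime (hprime q hq), mul_one, mul_one] at hmul
    exact hmul.cancel_right_div_gcd hd
  have hfloor : ∀ p ∈ Q, p ≤ ⌊x / b⌋₊ := by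
    intro p hp
    apply Nat.le_floor
    rw [le_div_iff₀ (by exact_mod_cast hb)]
    exact_mod_cast hle p hp
  have hd_le : (d : ℝ) ≤ T * m := by
    have hmul : d.gcd g * m = d := Nat.mul_div_cancel' (Nat.gcd_dvd_left d g)
    have hle_T : (d.gcd g : ℝ) ≤ T :=
      le_trans (by exact_mod_cast Nat.gcd_le_right d (Nat.gcd_pos_of_pos_left _ hb)) hgcd
    rw [← hmul, Nat.cast_mul]
    gcongr
  calc (#Q : ℝ) ≤ ((⌊x / b⌋₊ / m + 1 : ℕ) : ℝ) := by
        exact_mod_cast card_le_div_add_one_of_modEq hmod hfloor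
    _ ≤ x / b / m + 1 := by
        push_cast
        gcongr
        refine Nat.cast_div_le.trans ?_
        gcongr
        exact Nat.floor_le (by positivity)
    _ = 1 + x * (1 / m) * (b : ℝ)⁻¹ := by ring
    _ ≤ 1 + x * (T / d) * (b : ℝ)⁻¹ := by
        gcongr 1 + x * ?_ * _
        rw [div_le_div_iff₀ (by positivity) (by positivity)]
        linarith
    _ = 1 + x * T / d * (b : ℝ)⁻¹ := by ring

/-! ### Smooth and rough parts -/

/-- The `y`-smooth part of `n`: the largest divisor of `n ≠ 0` all of whose prime factors are at
most `y`. -/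
noncomputable def smoothPart (y : ℝ) (n : ℕ) : ℕ :=
  ∏ p ∈ n.primeFactors.filter fun p : ℕ => (p : ℝ) ≤ y, p ^ n.factorization p

/-- The `y`-rough part of `n`: the cofactor of `smoothPart y n`, composed of the prime factors
exceeding `y`. -/
noncomputable def roughPart (y : ℝ) (n : ℕ) : ℕ :=
  ∏ p ∈ n.primeFactors.filter fun p : ℕ => ¬ (p : ℝ) ≤ y, p ^ n.factorization p

theorem smoothPart_mul_roughPart (y : ℝ) {n : ℕ} (hn : n ≠ 0) :
    smoothPart y n * roughPart y n = n := by
  rw [smoothPart, roughPart, prod_filter_mul_prod_filter_not]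
  exact Nat.prod_factorization_pow_eq_self hn

theorem lt_of_prime_dvd_roughPart {y : ℝ} {n p : ℕ} (hp : p.Prime) (h : p ∣ roughPart y n) :
    y < p := by
  obtain ⟨q, hq, hdvd⟩ := hp.prime.dvd_finsetProd_iff _ |>.1 h
  rw [mem_filter, Nat.mem_primeFactors] at hq
  obtain rfl := (Nat.prime_dvd_prime_iff_eq hp hq.1.1).1 (hp.dvd_of_dvd_pow hdvd)
  exact not_le.1 hq.2

theorem le_smoothPart_of_dvd {y : ℝ} {n g : ℕ} (hn : n ≠ 0) (hg : g ∣ n)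
    (h : ∀ p, p.Prime → p ∣ g → (p : ℝ) ≤ y) : g ≤ smoothPart y n := by
  have hmul := smoothPart_mul_roughPart y hn
  have hcop : g.Coprime (roughPart y n) := Nat.coprime_of_dvd fun p hp hpg hprough =>
    (lt_of_prime_dvd_roughPart hp hprough).not_ge (h p hp hpg)
  have hdvd : g ∣ smoothPart y n := hcop.dvd_of_dvd_mul_right (hmul.symm ▸ hg)
  exact Nat.le_of_dvd (Nat.pos_of_ne_zero (left_ne_zero_of_mul (hmul.trans_ne hn))) hdvd

/-- `a` is a divisor of `n` exceeding `D` with all prime factors above `y`, and minimal in the sense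
that removing any prime factor from `a` brings it down to `D` or below. -/
structure IsMinimalRoughDivisor (y D : ℝ) (n a : ℕ) : Prop where
  dvd : a ∣ n
  lt : D < a
  rough : ∀ p, p.Prime → p ∣ a → y < p
  div_le : ∀ p, p.Prime → p ∣ a → ((a / p : ℕ) : ℝ) ≤ D

theorem exists_isMinimalRoughDivisor {y D : ℝ} {n : ℕ} (hn : n ≠ 0) (hD : D < roughPart y n) :
    ∃ a, IsMinimalRoughDivisor y D n a := by
  have hex : ∃ a : ℕ, a ∣ n ∧ D < a ∧ ∀ p : ℕ, p.Prime → p ∣ a → y < p :=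
    ⟨roughPart y n, Dvd.intro_left _ (smoothPart_mul_roughPart y hn), hD,
      fun _ => lt_of_prime_dvd_roughPart⟩
  obtain ⟨hdvd, hlt, hrough⟩ := Nat.find_spec hex
  refine ⟨Nat.find hex, hdvd, hlt, hrough, fun p hp hpa => ?_⟩
  by_contra! hgt
  have hpos : 0 < Nat.find hex := Nat.pos_of_ne_zero (ne_zero_of_dvd_ne_zero hn hdvd)
  have hdiv := Nat.div_dvd_of_dvd hpa
  exact Nat.find_min hex (Nat.div_lt_self hpos hp.one_lt)
    ⟨hdiv.trans hdvd, hgt, fun q hq hqa => hrough q hq (hqa.trans hdiv)⟩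

theorem le_sq_of_not_prime {a : ℕ} {D : ℝ} (ha : 1 < a) (hnp : ¬ a.Prime)
    (hdiv : ∀ p, p.Prime → p ∣ a → ((a / p : ℕ) : ℝ) ≤ D) : (a : ℝ) ≤ D ^ 2 := by
  have hle := hdiv a.minFac (Nat.minFac_prime ha.ne') a.minFac_dvd
  calc (a : ℝ) = (a.minFac * (a / a.minFac) : ℕ) := by rw [Nat.mul_div_cancel' a.minFac_dvd]
    _ ≤ ((a / a.minFac) ^ 2 : ℕ) := by
        rw [sq]
        gcongr
        exact Nat.minFac_le_div (by omega) hnp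
    _ ≤ D ^ 2 := by
        push_cast
        gcongr

theorem s_le_of_forall_div_le {a : ℕ} {D : ℝ}
    (hdiv : ∀ p, p.Prime → p ∣ a → ((a / p : ℕ) : ℝ) ≤ D) :
    (s a : ℝ) ≤ #a.primeFactors * (D * (1 + Real.log a)) := by
  have hterm : ∀ p ∈ a.primeFactors, (sigma1 (a / p) : ℝ) ≤ D * (1 + Real.log a) := by
    intro p hp
    obtain ⟨hprime, hpa, ha⟩ := Nat.mem_primeFactors.1 hp
    have hpos : 0 < a / p := Nat.div_pos (Nat.le_of_dvd (by omega) hpa) hprime.pos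
    have hlog : Real.log (a / p : ℕ) ≤ Real.log a :=
      Real.log_le_log (by exact_mod_cast hpos) (by exact_mod_cast Nat.div_le_self a p)
    have hlog_nonneg := Real.log_natCast_nonneg (a / p)
    exact (sigma1_le_mul_one_add_log _).trans
      (mul_le_mul (hdiv p hprime hpa) (by linarith) (by linarith)
        ((Nat.cast_nonneg _).trans (hdiv p hprime hpa)))
  calc (s a : ℝ) ≤ ∑ p ∈ a.primeFactors, (sigma1 (a / p) : ℝ) := by
        exact_mod_cast s_le_sum_sigma1_div a
    _ ≤ #a.primeFactors * (D * (1 + Real.log a)) := by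
        simpa only [nsmul_eq_mul] using sum_le_card_nsmul _ _ _ hterm

/-! ### Typical integers -/

/-- The conditions defining the complement of the exceptional set: `n ∈ (x / log x, x]` has no
divisor `m²` with `m > log x`, no prime factors `p > (log x)⁶` and `q` with `q ≡ -1 (mod p)`, and
its `(log x)⁶`-smooth part is at most `T`. -/
structure IsTypical (x T : ℝ) (n : ℕ) : Prop where
  lt : x / Real.log x < n
  le : (n : ℝ) ≤ x
  le_of_sq_dvd : ∀ m : ℕ, m ^ 2 ∣ n → (m : ℝ) ≤ Real.log x
  not_dvd_succ : ∀ p q : ℕ, p.Prime → q.Prime → Real.log x ^ 6 < p → p ∣ n → q ∣ n → ¬ p ∣ q + 1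
  smoothPart_le : (smoothPart (Real.log x ^ 6) n : ℝ) ≤ T

namespace IsTypical

variable {x T : ℝ} {n : ℕ}

theorem prime_le_of_dvd_sigma1 (h : IsTypical x T n) (hn : n ≠ 0) {p : ℕ} (hp : p.Prime)
    (hpn : p ∣ n) (hpσ : p ∣ sigma1 n) : (p : ℝ) ≤ Real.log x ^ 6 := by
  by_contra! hlt
  obtain ⟨q, hq, hqn, hdvd⟩ := exists_prime_dvd_sigma1_ordProj hn hp hpσ
  have hpow_dvd : q ^ n.factorization q ∣ n := Nat.ordProj_dvd n q
  have hpos : 0 < n.factorization q := hq.factorization_pos_of_dvd hn hqn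
  generalize n.factorization q = e at hdvd hpow_dvd hpos
  obtain rfl | htwo : e = 1 ∨ 2 ≤ e := by omega
  · rw [pow_one, sigma1_prime hq] at hdvd
    exact h.not_dvd_succ p q hp hq hlt hpn hqn hdvd
  · -- `p ≤ σ(q ^ e) ≤ q ^ (2e) ≤ m ^ 6` where `m = q ^ ⌊e / 2⌋` has `m² ∣ n`
    have hm : ((q ^ (e / 2) : ℕ) : ℝ) ≤ Real.log x :=
      h.le_of_sq_dvd _ ((pow_mul q (e / 2) 2).symm ▸ (pow_dvd_pow q (by omega)).trans hpow_dvd)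
    have hσ : sigma1 (q ^ e) ≤ (q ^ e) ^ 2 := ArithmeticFunction.sigma_le_pow_succ 1 _
    have hσ_pos : 0 < sigma1 (q ^ e) :=
      ArithmeticFunction.sigma_pos 1 _ (pow_pos hq.pos e).ne'
    have hple : p ≤ (q ^ (e / 2)) ^ 6 := by
      refine (Nat.le_of_dvd hσ_pos hdvd).trans (hσ.trans ?_)
      rw [← pow_mul, ← pow_mul]
      exact Nat.pow_le_pow_right hq.pos (by omega)
    refine hlt.not_ge ?_
    calc (p : ℝ) ≤ ((q ^ (e / 2) : ℕ) : ℝ) ^ 6 := by exact_mod_cast hple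
      _ ≤ Real.log x ^ 6 := by gcongr

theorem gcd_sigma1_le (h : IsTypical x T n) (hn : n ≠ 0) {a b : ℕ} (hab : a * b = n)
    (hcop : a.Coprime b) : (b.gcd (sigma1 b) : ℝ) ≤ T := by
  have hbn : b ∣ n := Dvd.intro_left a hab
  have hσ : sigma1 b ∣ sigma1 n := by
    rw [← hab, sigma1_mul_of_coprime hcop]
    exact dvd_mul_left _ _
  have hle : b.gcd (sigma1 b) ≤ smoothPart (Real.log x ^ 6) n :=
    le_smoothPart_of_dvd hn ((Nat.gcd_dvd_left _ _).trans hbn) fun p hp hpg =>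
      h.prime_le_of_dvd_sigma1 hn hp ((hpg.trans (Nat.gcd_dvd_left _ _)).trans hbn)
        ((hpg.trans (Nat.gcd_dvd_right _ _)).trans hσ)
  exact le_trans (by exact_mod_cast hle) h.smoothPart_le

theorem not_sq_dvd (h : IsTypical x T n) (hx : 1 ≤ Real.log x) {p : ℕ}
    (hp : Real.log x ^ 6 < p) : ¬ p ^ 2 ∣ n := by
  intro hdvd
  have hle := h.le_of_sq_dvd p hdvd
  have hpow := le_self_pow₀ hx (n := 6) (by norm_num)
  linarith

theorem squarefree_of_rough (h : IsTypical x T n) (hx : 1 ≤ Real.log x) {a : ℕ} (ha : a ∣ n)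
    (hrough : ∀ p, p.Prime → p ∣ a → Real.log x ^ 6 < p) : Squarefree a := by
  rw [Nat.squarefree_iff_prime_squarefree]
  intro p hp hpp
  exact h.not_sq_dvd hx (hrough p hp (dvd_of_mul_left_dvd hpp)) (sq p ▸ hpp.trans ha)

theorem coprime_of_rough (h : IsTypical x T n) (hx : 1 ≤ Real.log x) {a b : ℕ} (hab : a * b = n)
    (hrough : ∀ p, p.Prime → p ∣ a → Real.log x ^ 6 < p) : a.Coprime b := by
  refine Nat.coprime_of_dvd fun p hp hpa hpb => ?_
  refine h.not_sq_dvd hx (hrough p hp hpa) ?_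
  rw [sq, ← hab]
  exact mul_dvd_mul hpa hpb

end IsTypical

/-! ### Admissible factorizations -/

/-- The relations between the parameters of the counting argument: `T` bounds the smooth part of a
typical integer, and `r` stands for `d ^ (1 / 4)`. -/
structure ParameterBounds (x T r : ℝ) (d : ℕ) : Prop where
  two_le_log : 2 ≤ Real.log x
  log_pow_le : Real.log x ^ 10 ≤ T
  pow_le : T ^ 16 ≤ x
  sq_lt : T ^ 2 < r
  pow_eq : r ^ 4 = d

namespace ParameterBounds

variable {x T r : ℝ} {d : ℕ}

theorem log_pow_mul_le (h : ParameterBounds x T r d) {k : ℕ} (hk : k ≤ 5) :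
    4 * Real.log x ^ k ≤ T := by
  have hlog := h.two_le_log
  calc 4 * Real.log x ^ k ≤ Real.log x ^ 2 * Real.log x ^ 5 := by
        gcongr
        · nlinarith
        · linarith
    _ = Real.log x ^ 7 := by ring
    _ ≤ Real.log x ^ 10 := pow_le_pow_right₀ (by linarith) (by norm_num)
    _ ≤ T := h.log_pow_le

theorem four_le (h : ParameterBounds x T r d) : 4 ≤ T := by
  simpa using h.log_pow_mul_le (Nat.zero_le 5)

theorem four_mul_log_le (h : ParameterBounds x T r d) : 4 * Real.log x ≤ T := by
  simpa using h.log_pow_mul_le (k := 1) (by norm_num)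

theorem four_le_left (h : ParameterBounds x T r d) : 4 ≤ x :=
  h.four_le.trans ((le_self_pow₀ (by linarith [h.four_le]) (by norm_num)).trans h.pow_le)

theorem le_right (h : ParameterBounds x T r d) : T ≤ r :=
  (le_self_pow₀ (by linarith [h.four_le]) two_ne_zero).trans h.sq_lt.le

theorem d_pos (h : ParameterBounds x T r d) : 0 < d := by
  have hr : 0 < r ^ 4 := pow_pos (by linarith [h.four_le, h.le_right]) 4
  rw [h.pow_eq] at hr
  exact_mod_cast hr

theorem one_le_mul_log (h : ParameterBounds x T r d) : 1 ≤ r * Real.log x := by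
  nlinarith [h.two_le_log, h.four_le, h.le_right]

theorem mul_log_sq_mul_le (h : ParameterBounds x T r d) (hd : d ≤ x * T) :
    r * Real.log x ^ 2 * T ≤ x := by
  have hT := h.four_le
  have hx := h.four_le_left
  have hlog := h.log_pow_mul_le (k := 2) (by norm_num)
  refine le_of_pow_le_pow_left₀ four_ne_zero (by linarith) ?_
  calc (r * Real.log x ^ 2 * T) ^ 4 = d * (Real.log x ^ 2) ^ 4 * T ^ 4 := by rw [← h.pow_eq]; ring
    _ ≤ (x * T) * T ^ 4 * T ^ 4 := by
        gcongr
        nlinarith [sq_nonneg (Real.log x)]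
    _ = x * T ^ 9 := by ring
    _ ≤ x * T ^ 16 := by
        gcongr
        · linarith
        · norm_num
    _ ≤ x * x := by gcongr; exact h.pow_le
    _ = x ^ 2 := by ring
    _ ≤ x ^ 4 := pow_le_pow_right₀ (by linarith) (by norm_num)

theorem card_error_le (h : ParameterBounds x T r d) :
    x * T / d * (1 + Real.log x) ≤ x / (r * Real.log x) := by
  have hT := h.four_le
  have hx := h.four_le_left
  have hr : 1 ≤ r := by linarith [h.le_right]
  have hlog := h.two_le_log
  have hkey : T * (1 + Real.log x) * Real.log x ≤ r ^ 3 :=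
    calc T * (1 + Real.log x) * Real.log x ≤ T * T := by
          rw [mul_assoc]
          gcongr
          nlinarith [h.log_pow_mul_le (k := 2) (by norm_num)]
      _ ≤ r := by linarith [h.sq_lt]
      _ ≤ r ^ 3 := le_self_pow₀ hr (by norm_num)
  rw [← h.pow_eq, div_mul_eq_mul_div, div_le_div_iff₀ (by positivity) (by positivity)]
  calc x * T * (1 + Real.log x) * (r * Real.log x)
      = x * r * (T * (1 + Real.log x) * Real.log x) := by ring
    _ ≤ x * r * r ^ 3 := by gcongr
    _ = x * r ^ 4 := by ring

end ParameterBounds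

namespace IsTypical

variable {x T r : ℝ} {n d : ℕ}

theorem one_lt (h : IsTypical x T n) (hx : 1 ≤ Real.log x) : 1 < n := by
  have hx0 : 0 ≤ x := (Nat.cast_nonneg n).trans h.le
  have hone : 1 ≤ x / Real.log x := by
    rw [one_le_div (by linarith)]
    exact Real.log_le_self hx0
  exact_mod_cast hone.trans_lt h.lt

theorem natCast_le_of_dvd_s (h : IsTypical x T n) (hx : 1 ≤ Real.log x)
    (hT : 1 + Real.log x ≤ T) (hd : d ∣ s n) : (d : ℝ) ≤ x * T := by
  have hn := h.one_lt hx
  have hd_le : d ≤ sigma1 n :=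
    (Nat.le_of_dvd (s_pos hn) hd).trans ((s_add_self n).symm ▸ Nat.le_add_right _ _)
  have hlog : Real.log n ≤ Real.log x := Real.log_le_log (by exact_mod_cast hn.pos) h.le
  calc (d : ℝ) ≤ sigma1 n := by exact_mod_cast hd_le
    _ ≤ n * (1 + Real.log n) := sigma1_le_mul_one_add_log n
    _ ≤ x * T := mul_le_mul h.le (by linarith) (by linarith [Real.log_natCast_nonneg n])
        ((Nat.cast_nonneg n).trans h.le)

theorem lt_roughPart (h : IsTypical x T n) (hpar : ParameterBounds x T r d) (hd : d ∣ s n) :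
    r * Real.log x < roughPart (Real.log x ^ 6) n := by
  have hlog := hpar.two_le_log
  have hn := h.one_lt (by linarith)
  by_contra! hle
  have hn_le : (n : ℝ) ≤ T * (r * Real.log x) := by
    rw [← smoothPart_mul_roughPart (Real.log x ^ 6) (by omega : n ≠ 0), Nat.cast_mul]
    exact mul_le_mul h.smoothPart_le hle (Nat.cast_nonneg _) (by linarith [hpar.four_le])
  have hd_le := h.natCast_le_of_dvd_s (by linarith) (by linarith [hpar.four_mul_log_le]) hd
  have hlt := h.lt
  rw [div_lt_iff₀ (by linarith)] at hlt
  nlinarith [hpar.mul_log_sq_mul_le hd_le]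

end IsTypical

/-- A factorization `n = a * b ≤ x` with `d ∣ s n`, where `a > D` is only barely larger than `D`:
it is a prime, or it is at most `D²`, and in either case `s a` is almost as small as `D`. -/
structure IsAdmissible (x T D : ℝ) (d a b : ℕ) : Prop where
  right_pos : 0 < b
  mul_le : ((a * b : ℕ) : ℝ) ≤ x
  lt_left : D < a
  dvd_s : d ∣ s (a * b)
  coprime : a.Coprime b
  gcd_le : (b.gcd (sigma1 b) : ℝ) ≤ T
  squarefree : Squarefree a
  odd : Odd a
  s_le : (s a : ℝ) ≤ 4 * Real.log x ^ 2 * D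
  prime_or_le : a.Prime ∨ (a : ℝ) ≤ D ^ 2

theorem IsTypical.exists_isAdmissible {x T r : ℝ} {n d : ℕ} (h : IsTypical x T n)
    (hpar : ParameterBounds x T r d) (hd : d ∣ s n) :
    ∃ a b, a * b = n ∧ IsAdmissible x T (r * Real.log x) d a b := by
  have hlog : 1 ≤ Real.log x := by linarith [hpar.two_le_log]
  have hn : n ≠ 0 := (h.one_lt hlog).ne_bot
  have hD := hpar.one_le_mul_log
  obtain ⟨a, ha⟩ := exists_isMinimalRoughDivisor hn (h.lt_roughPart hpar hd)
  obtain ⟨b, rfl⟩ := ha.dvd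
  have hcop := h.coprime_of_rough hlog rfl ha.rough
  have ha_one : 1 < a := by exact_mod_cast hD.trans_lt ha.lt
  have hb : 0 < b := Nat.pos_of_ne_zero (right_ne_zero_of_mul hn)
  have hloga : Real.log a ≤ Real.log x := by
    refine Real.log_le_log (by positivity) (le_trans ?_ h.le)
    exact_mod_cast Nat.le_mul_of_pos_right a hb
  have hodd : Odd a := by
    rw [← Nat.not_even_iff_odd, even_iff_two_dvd]
    intro htwo
    have hlt := ha.rough 2 Nat.prime_two htwo
    have hpow : (2 : ℝ) ^ 6 ≤ Real.log x ^ 6 := by gcongr; exact hpar.two_le_log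
    norm_num at hlt hpow
    linarith
  have hs : (s a : ℝ) ≤ 4 * Real.log x ^ 2 * (r * Real.log x) :=
    calc (s a : ℝ) ≤ #a.primeFactors * (r * Real.log x * (1 + Real.log a)) :=
          s_le_of_forall_div_le ha.div_le
      _ ≤ (2 * Real.log x) * (r * Real.log x * (2 * Real.log x)) := by
          gcongr
          · linarith [card_primeFactors_le_two_mul_log a]
          · linarith
      _ = 4 * Real.log x ^ 2 * (r * Real.log x) := by ring
  exact ⟨a, b, rfl, hb, h.le, ha.lt, hd, hcop, h.gcd_sigma1_le hn rfl hcop,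
    h.squarefree_of_rough hlog ha.dvd ha.rough, hodd, hs,
    or_iff_not_imp_left.2 fun hnp => le_sq_of_not_prime ha_one hnp ha.div_le⟩

namespace IsAdmissible

variable {x T r : ℝ} {d : ℕ} {P : Finset (ℕ × ℕ)}

theorem right_mem_Icc {D : ℝ} {a b : ℕ} (h : IsAdmissible x T D d a b) (hD : 0 < D) :
    b ∈ Icc 1 ⌊x / D⌋₊ := by
  refine mem_Icc.2 ⟨h.right_pos, Nat.le_floor ?_⟩
  rw [le_div_iff₀ hD]
  have hmul := h.mul_le
  push_cast at hmul
  nlinarith [h.lt_left, b.cast_nonneg (α := ℝ)]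

theorem card_composite_le (hpar : ParameterBounds x T r d)
    (hP : ∀ z ∈ P, IsAdmissible x T (r * Real.log x) d z.1 z.2) (hcomp : ∀ z ∈ P, ¬ z.1.Prime) :
    (#P : ℝ) ≤ x / (r * Real.log x) := by
  have hD := hpar.one_le_mul_log
  have hT := hpar.four_le
  have hr : 0 < r := by linarith [hpar.le_right]
  have hsize : (r * Real.log x) ^ 2 * (4 * Real.log x ^ 2 * (r * Real.log x)) * T < d :=
    calc (r * Real.log x) ^ 2 * (4 * Real.log x ^ 2 * (r * Real.log x)) * T
        = r ^ 3 * (4 * Real.log x ^ 5) * T := by ring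
      _ ≤ r ^ 3 * T * T := by
          gcongr
          exact hpar.log_pow_mul_le le_rfl
      _ = r ^ 3 * T ^ 2 := by ring
      _ < r ^ 3 * r := by
          gcongr
          exact hpar.sq_lt
      _ = d := by rw [← hpar.pow_eq]; ring
  have hcard : #P ≤ #(Icc 1 ⌊x / (r * Real.log x)⌋₊) := by
    refine card_le_card_of_injOn Prod.snd
      (fun z hz => (hP z hz).right_mem_Icc (by linarith)) ?_
    rintro ⟨a, b⟩ hz ⟨a', _⟩ hz' rfl
    have h := hP _ hz
    have h' := hP _ hz'
    exact Prod.ext (eq_of_dvd_s_mul_of_lt h.right_pos hsize h.gcd_le h.coprime h'.coprime h.dvd_s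
      h'.dvd_s h.squarefree h'.squarefree h.odd h'.odd (h.prime_or_le.resolve_left (hcomp _ hz))
      (h'.prime_or_le.resolve_left (hcomp _ hz')) h.s_le h'.s_le) rfl
  rw [Nat.card_Icc, Nat.add_sub_cancel] at hcard
  exact (Nat.cast_le.2 hcard).trans (Nat.floor_le (by have := hpar.four_le_left; positivity))

theorem card_prime_fiber_le {D : ℝ} (hd : 0 < d) (hx : 0 ≤ x) (hT : 0 ≤ T)
    (hP : ∀ z ∈ P, IsAdmissible x T D d z.1 z.2) (hprime : ∀ z ∈ P, z.1.Prime) (b : ℕ) :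
    (#{z ∈ P | z.2 = b} : ℝ) ≤ 1 + x * T / d * (b : ℝ)⁻¹ := by
  rcases eq_empty_or_nonempty {z ∈ P | z.2 = b} with hempty | ⟨z₀, hz₀⟩
  · rw [hempty, card_empty, Nat.cast_zero]
    positivity
  have hinj : Set.InjOn Prod.fst (↑{z ∈ P | z.2 = b} : Set (ℕ × ℕ)) := by
    intro z hz z' hz' heq
    rw [mem_coe, mem_filter] at hz hz'
    exact Prod.ext heq (hz.2.trans hz'.2.symm)
  have hadm : ∀ a ∈ image Prod.fst {z ∈ P | z.2 = b}, a.Prime ∧ IsAdmissible x T D d a b := by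
    simp only [mem_image, mem_filter]
    rintro _ ⟨z, ⟨hz, rfl⟩, rfl⟩
    exact ⟨hprime z hz, hP z hz⟩
  have h₀ := (hadm z₀.1 (mem_image_of_mem _ hz₀)).2
  rw [← card_image_of_injOn hinj]
  exact card_primes_dvd_s_mul_le h₀.right_pos hd hx h₀.gcd_le (fun a ha => (hadm a ha).1)
    (fun a ha => (hadm a ha).2.coprime) (fun a ha => (hadm a ha).2.dvd_s)
    (fun a ha => (hadm a ha).2.mul_le)

theorem card_prime_le (hpar : ParameterBounds x T r d)
    (hP : ∀ z ∈ P, IsAdmissible x T (r * Real.log x) d z.1 z.2) (hprime : ∀ z ∈ P, z.1.Prime) :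
    (#P : ℝ) ≤ 2 * (x / (r * Real.log x)) := by
  have hD := hpar.one_le_mul_log
  have hx := hpar.four_le_left
  have hT := hpar.four_le
  set N := ⌊x / (r * Real.log x)⌋₊
  have hN : (N : ℝ) ≤ x / (r * Real.log x) := Nat.floor_le (by positivity)
  have hharmonic : ∑ b ∈ Icc 1 N, (b : ℝ)⁻¹ ≤ 1 + Real.log x :=
    sum_Icc_inv_le_one_add_log (by linarith) (hN.trans (div_le_self (by linarith) hD))
  calc (#P : ℝ) = ∑ b ∈ Icc 1 N, (#{z ∈ P | z.2 = b} : ℝ) := by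
        rw [card_eq_sum_card_fiberwise (f := Prod.snd) (t := Icc 1 N)
          fun z hz => (hP z hz).right_mem_Icc (by linarith), Nat.cast_sum]
    _ ≤ ∑ b ∈ Icc 1 N, (1 + x * T / d * (b : ℝ)⁻¹) := sum_le_sum fun b _ =>
        card_prime_fiber_le hpar.d_pos (by linarith) (by linarith) hP hprime b
    _ = N + x * T / d * ∑ b ∈ Icc 1 N, (b : ℝ)⁻¹ := by
        rw [sum_add_distrib, mul_sum, sum_const, Nat.card_Icc, nsmul_eq_mul, mul_one,
          Nat.add_sub_cancel]
    _ ≤ N + x * T / d * (1 + Real.log x) := by gcongr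
    _ ≤ 2 * (x / (r * Real.log x)) := by linarith [hpar.card_error_le]

theorem card_le (hpar : ParameterBounds x T r d)
    (hP : ∀ z ∈ P, IsAdmissible x T (r * Real.log x) d z.1 z.2) :
    (#P : ℝ) ≤ 3 * (x / (r * Real.log x)) := by
  have hprime := card_prime_le (P := {z ∈ P | z.1.Prime}) hpar
    (fun z hz => hP z (mem_filter.1 hz).1) fun z hz => (mem_filter.1 hz).2
  have hcomp := card_composite_le (P := {z ∈ P | ¬ z.1.Prime}) hpar
    (fun z hz => hP z (mem_filter.1 hz).1) fun z hz => (mem_filter.1 hz).2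
  rw [← card_filter_add_card_filter_not (s := P) fun z => z.1.Prime, Nat.cast_add]
  linarith

end IsAdmissible

theorem card_typical_dvd_s_le {x T r : ℝ} {d : ℕ} (hpar : ParameterBounds x T r d) {S : Finset ℕ}
    (hS : ∀ n ∈ S, IsTypical x T n ∧ d ∣ s n) : (#S : ℝ) ≤ 3 * (x / (r * Real.log x)) := by
  choose! a b hmul hadm using fun n hn => (hS n hn).1.exists_isAdmissible hpar (hS n hn).2
  have hinj : Set.InjOn (fun n => (a n, b n)) S := fun n hn n' hn' heq => by
    obtain ⟨ha, hb⟩ := Prod.mk.inj heq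
    rw [← hmul n hn, ← hmul n' hn', ha, hb]
  rw [← card_image_of_injOn hinj]
  exact IsAdmissible.card_le hpar (forall_mem_image.2 hadm)

/-! ### The exceptional set -/

theorem card_filter_le_mul_sum_inv {ι : Type*} {x : ℝ} {N : ℕ} (hN : N ≤ x) (I : Finset ι)
    (f : ι → ℕ) {P : ℕ → Prop} (h : ∀ n ∈ Icc 1 N, P n → ∃ i ∈ I, f i ∣ n) :
    (#{n ∈ Icc 1 N | P n} : ℝ) ≤ x * ∑ i ∈ I, (f i : ℝ)⁻¹ := by
  have hcover : {n ∈ Icc 1 N | P n} ⊆ I.biUnion fun i => {n ∈ Ioc 0 N | f i ∣ n} := by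
    intro n hn
    obtain ⟨hn, hP⟩ := mem_filter.1 hn
    obtain ⟨i, hi, hdvd⟩ := h n hn hP
    exact mem_biUnion.2 ⟨i, hi, mem_filter.2 ⟨hn, hdvd⟩⟩
  have hcard : #{n ∈ Icc 1 N | P n} ≤ ∑ i ∈ I, N / f i := by
    refine (card_le_card hcover).trans (card_biUnion_le.trans_eq (sum_congr rfl fun i _ => ?_))
    convert! Nat.Ioc_filter_dvd_card_eq_div N (f i)
  calc (#{n ∈ Icc 1 N | P n} : ℝ) ≤ ∑ i ∈ I, ((N / f i : ℕ) : ℝ) := by exact_mod_cast hcard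
    _ ≤ ∑ i ∈ I, x * (f i : ℝ)⁻¹ := sum_le_sum fun i _ => by
        refine Nat.cast_div_le.trans ?_
        rw [← div_eq_mul_inv]
        gcongr
    _ = x * ∑ i ∈ I, (f i : ℝ)⁻¹ := by rw [mul_sum]

theorem card_exists_sq_dvd_le {x w : ℝ} {N : ℕ} (hN : N ≤ x) (hw : 1 ≤ w) :
    (#{n ∈ Icc 1 N | ∃ m : ℕ, m ^ 2 ∣ n ∧ w < m} : ℝ) ≤ x * (2 / w) := by
  have hx : 0 ≤ x := (Nat.cast_nonneg N).trans hN
  refine (card_filter_le_mul_sum_inv hN (Ioc ⌊w⌋₊ N) (fun m => m ^ 2) ?_).trans ?_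
  · rintro n hn ⟨m, hdvd, hlt⟩
    rw [mem_Icc] at hn
    have hle : m ≤ N :=
      (Nat.le_self_pow two_ne_zero m).trans ((Nat.le_of_dvd hn.1 hdvd).trans hn.2)
    exact ⟨m, mem_Ioc.2 ⟨(Nat.floor_lt (by linarith)).2 hlt, hle⟩, hdvd⟩
  · push_cast
    gcongr
    exact sum_Ioc_floor_inv_sq_le hw N

theorem exists_mul_mul_sub_one_dvd {n p q : ℕ} (hn : 0 < n) (hp : p.Prime) (hq : q.Prime)
    (hpn : p ∣ n) (hqn : q ∣ n) (h : p ∣ q + 1) : ∃ k ∈ Icc 1 n, p * (k * p - 1) ∣ n := by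
  have hne : p ≠ q := by
    rintro rfl
    exact hp.one_lt.ne' (Nat.dvd_one.1 ((Nat.dvd_add_right dvd_rfl).1 h))
  obtain ⟨k, hk⟩ := h
  have hkq : k * p - 1 = q := by rw [mul_comm k, ← hk, Nat.add_sub_cancel]
  refine ⟨k, mem_Icc.2 ⟨Nat.one_le_iff_ne_zero.2 ?_, ?_⟩, ?_⟩
  · rintro rfl
    omega
  · have := Nat.le_of_dvd hn hqn
    nlinarith [hp.two_le, hq.two_le]
  · rw [hkq]
    exact ((Nat.coprime_primes hp hq).2 hne).mul_dvd_of_dvd_of_dvd hpn hqn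

theorem inv_mul_mul_sub_one_le {p k : ℕ} (hp : 2 ≤ p) (hk : 1 ≤ k) :
    ((p * (k * p - 1) : ℕ) : ℝ)⁻¹ ≤ 2 * (((p : ℝ) ^ 2)⁻¹ * (k : ℝ)⁻¹) := by
  have hkp : k * p ≤ 2 * (k * p - 1) := by
    have : 2 ≤ k * p := by nlinarith
    omega
  have hle : ((p ^ 2 * k : ℕ) : ℝ) ≤ (2 * (p * (k * p - 1)) : ℕ) := by
    exact_mod_cast (by nlinarith : p ^ 2 * k ≤ 2 * (p * (k * p - 1)))
  have hpos : 0 < p * (k * p - 1) := Nat.mul_pos (by omega) (by nlinarith)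
  rw [← mul_inv, ← div_eq_mul_inv, inv_eq_one_div,
    div_le_div_iff₀ (by exact_mod_cast hpos) (by positivity)]
  push_cast [-Nat.cast_sub] at hle ⊢
  linarith

theorem card_exists_prime_dvd_succ_le {x y : ℝ} {N : ℕ} (hx : 1 ≤ x) (hN : N ≤ x) (hy : 1 ≤ y) :
    (#{n ∈ Icc 1 N | ∃ p q : ℕ, p.Prime ∧ q.Prime ∧ y < p ∧ p ∣ n ∧ q ∣ n ∧ p ∣ q + 1} : ℝ) ≤
      x * (4 * (1 + Real.log x) / y) := by
  refine (card_filter_le_mul_sum_inv hN (Ioc ⌊y⌋₊ N ×ˢ Icc 1 N)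
    (fun z => z.1 * (z.2 * z.1 - 1)) ?_).trans ?_
  · rintro n hn ⟨p, q, hp, hq, hlt, hpn, hqn, hdvd⟩
    rw [mem_Icc] at hn
    obtain ⟨k, hk, hkn⟩ := exists_mul_mul_sub_one_dvd hn.1 hp hq hpn hqn hdvd
    have hpN : p ∈ Ioc ⌊y⌋₊ N :=
      mem_Ioc.2 ⟨(Nat.floor_lt (by linarith)).2 hlt, (Nat.le_of_dvd hn.1 hpn).trans hn.2⟩
    exact ⟨(p, k), mem_product.2 ⟨hpN, Icc_subset_Icc_right hn.2 hk⟩, hkn⟩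
  have hfloor : 1 ≤ ⌊y⌋₊ := (Nat.one_le_floor_iff y).2 hy
  gcongr
  calc ∑ z ∈ Ioc ⌊y⌋₊ N ×ˢ Icc 1 N, ((z.1 * (z.2 * z.1 - 1) : ℕ) : ℝ)⁻¹
      ≤ ∑ z ∈ Ioc ⌊y⌋₊ N ×ˢ Icc 1 N, 2 * (((z.1 : ℝ) ^ 2)⁻¹ * (z.2 : ℝ)⁻¹) := by
        refine sum_le_sum fun z hz => ?_
        rw [mem_product, mem_Ioc, mem_Icc] at hz
        exact inv_mul_mul_sub_one_le (by omega) hz.2.1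
    _ = 2 * ((∑ p ∈ Ioc ⌊y⌋₊ N, ((p : ℝ) ^ 2)⁻¹) * ∑ k ∈ Icc 1 N, (k : ℝ)⁻¹) := by
        rw [← mul_sum, sum_mul_sum, sum_product]
    _ ≤ 2 * (2 / y * (1 + Real.log x)) := by
        gcongr
        · exact sum_Ioc_floor_inv_sq_le hy N
        · exact sum_Icc_inv_le_one_add_log hx hN
    _ = 4 * (1 + Real.log x) / y := by ring

theorem sum_factorization_Icc (N p : ℕ) :
    ∑ n ∈ Icc 1 N, n.factorization p = N.factorial.factorization p := by
  rw [← prod_Ico_id_eq_factorial, Nat.factorization_prod_apply fun n hn =>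
    Nat.one_le_iff_ne_zero.1 (mem_Ico.1 hn).1, Ico_add_one_right_eq_Icc]

theorem log_smoothPart_le (y : ℝ) (n : ℕ) : Real.log (smoothPart y n) ≤
    ∑ p ∈ Icc 1 ⌊y⌋₊ with p.Prime, (n.factorization p : ℝ) * Real.log p := by
  have hmem : ∀ p ∈ n.primeFactors.filter fun p : ℕ => (p : ℝ) ≤ y, p.Prime ∧ (p : ℝ) ≤ y := by
    intro p hp
    rw [mem_filter] at hp
    exact ⟨Nat.prime_of_mem_primeFactors hp.1, hp.2⟩
  rw [smoothPart, Nat.cast_prod,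
    Real.log_prod fun p hp => by exact_mod_cast (pow_pos (hmem p hp).1.pos _).ne']
  simp only [Nat.cast_pow, Real.log_pow]
  refine sum_le_sum_of_subset_of_nonneg (fun p hp => ?_) fun p _ _ =>
    mul_nonneg (Nat.cast_nonneg _) (Real.log_natCast_nonneg p)
  obtain ⟨hprime, hle⟩ := hmem p hp
  exact mem_filter.2 ⟨mem_Icc.2 ⟨hprime.pos, Nat.le_floor hle⟩, hprime⟩

theorem factorization_factorial_le {x : ℝ} {N p : ℕ} (hN : N ≤ x) (hp : p.Prime) :
    (N.factorial.factorization p : ℝ) ≤ 2 * x * (p : ℝ)⁻¹ := by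
  have hp2 : (2 : ℝ) ≤ p := by exact_mod_cast hp.two_le
  calc (N.factorial.factorization p : ℝ) ≤ (N / (p - 1) : ℕ) := by
        exact_mod_cast Nat.factorization_factorial_le_div_pred hp N
    _ ≤ x / (p - 1) := by
        refine Nat.cast_div_le.trans ?_
        rw [Nat.cast_pred hp.pos]
        gcongr
        linarith
    _ ≤ 2 * x * (p : ℝ)⁻¹ := by
        rw [← div_eq_mul_inv, div_le_div_iff₀ (by linarith) (by linarith)]
        nlinarith

theorem sum_log_smoothPart_le {x y : ℝ} {N : ℕ} (hN : N ≤ x) (hy : 1 ≤ y) :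
    ∑ n ∈ Icc 1 N, Real.log (smoothPart y n) ≤
      x * (2 * Real.log y * (1 + Real.log y)) := by
  have hx : 0 ≤ x := (Nat.cast_nonneg N).trans hN
  have hlog : 0 ≤ Real.log y := Real.log_nonneg hy
  calc ∑ n ∈ Icc 1 N, Real.log (smoothPart y n)
      ≤ ∑ n ∈ Icc 1 N, ∑ p ∈ Icc 1 ⌊y⌋₊ with p.Prime, (n.factorization p : ℝ) * Real.log p :=
        sum_le_sum fun n _ => log_smoothPart_le y n
    _ = ∑ p ∈ Icc 1 ⌊y⌋₊ with p.Prime, (N.factorial.factorization p : ℝ) * Real.log p := by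
        rw [sum_comm]
        simp only [← sum_mul, ← Nat.cast_sum, sum_factorization_Icc]
    _ ≤ ∑ p ∈ Icc 1 ⌊y⌋₊ with p.Prime, 2 * x * (p : ℝ)⁻¹ * Real.log y := by
        refine sum_le_sum fun p hp => ?_
        rw [mem_filter, mem_Icc] at hp
        have hp0 : (0 : ℝ) < p := by exact_mod_cast hp.1.1
        gcongr
        · exact factorization_factorial_le hN hp.2
        · exact (Nat.le_floor_iff (by linarith)).1 hp.1.2
    _ ≤ ∑ p ∈ Icc 1 ⌊y⌋₊, 2 * x * (p : ℝ)⁻¹ * Real.log y :=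
        sum_le_sum_of_subset_of_nonneg (filter_subset _ _) fun _ _ _ => by positivity
    _ = x * (2 * Real.log y * ∑ p ∈ Icc 1 ⌊y⌋₊, (p : ℝ)⁻¹) := by
        simp only [mul_sum]
        exact sum_congr rfl fun p _ => by ring
    _ ≤ x * (2 * Real.log y * (1 + Real.log y)) := by
        gcongr
        exact sum_Icc_inv_le_one_add_log hy (Nat.floor_le (by linarith))

theorem card_lt_smoothPart_le {x y T : ℝ} {N : ℕ} (hN : N ≤ x) (hy : 1 ≤ y) (hT : 1 < T) :
    (#{n ∈ Icc 1 N | T < (smoothPart y n : ℝ)} : ℝ) ≤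
      x * (2 * Real.log y * (1 + Real.log y) / Real.log T) := by
  rw [← mul_div_assoc, le_div_iff₀ (Real.log_pos hT)]
  calc (#{n ∈ Icc 1 N | T < (smoothPart y n : ℝ)} : ℝ) * Real.log T
      ≤ ∑ n ∈ Icc 1 N with T < (smoothPart y n : ℝ), Real.log (smoothPart y n) := by
        rw [← nsmul_eq_mul]
        exact card_nsmul_le_sum _ _ _ fun n hn =>
          Real.log_le_log (by linarith) (mem_filter.1 hn).2.le
    _ ≤ ∑ n ∈ Icc 1 N, Real.log (smoothPart y n) :=
        sum_le_sum_of_subset_of_nonneg (filter_subset _ _) fun _ _ _ =>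
          Real.log_natCast_nonneg _
    _ ≤ x * (2 * Real.log y * (1 + Real.log y)) := sum_log_smoothPart_le hN hy

theorem card_not_isTypical_le {x T : ℝ} (hlog : 1 ≤ Real.log x) (hx : 1 ≤ x) (hT : 1 < T) :
    (#{n ∈ Icc 1 ⌊x⌋₊ | ¬ IsTypical x T n} : ℝ) ≤
      x * (1 / Real.log x + 2 / Real.log x + 4 * (1 + Real.log x) / Real.log x ^ 6 +
        2 * Real.log (Real.log x ^ 6) * (1 + Real.log (Real.log x ^ 6)) / Real.log T) := by
  have hN : (⌊x⌋₊ : ℝ) ≤ x := Nat.floor_le (by linarith)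
  have hy : 1 ≤ Real.log x ^ 6 := one_le_pow₀ hlog
  have hcover : {n ∈ Icc 1 ⌊x⌋₊ | ¬ IsTypical x T n} ⊆
      Icc 1 ⌊x / Real.log x⌋₊ ∪
      {n ∈ Icc 1 ⌊x⌋₊ | ∃ m : ℕ, m ^ 2 ∣ n ∧ Real.log x < m} ∪
      {n ∈ Icc 1 ⌊x⌋₊ | ∃ p q : ℕ, p.Prime ∧ q.Prime ∧ Real.log x ^ 6 < p ∧ p ∣ n ∧ q ∣ n ∧
        p ∣ q + 1} ∪
      {n ∈ Icc 1 ⌊x⌋₊ | T < (smoothPart (Real.log x ^ 6) n : ℝ)} := by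
    intro n hn
    obtain ⟨hn, hnot⟩ := mem_filter.1 hn
    contrapose! hnot
    simp only [mem_union, mem_filter, hn, true_and, not_or] at hnot
    obtain ⟨⟨⟨hsmall, hsq⟩, hsucc⟩, hsmooth⟩ := hnot
    rw [mem_Icc] at hn
    refine ⟨?_, (Nat.cast_le.2 hn.2).trans hN, ?_, ?_, not_lt.1 hsmooth⟩
    · by_contra! hle
      exact hsmall (mem_Icc.2 ⟨hn.1, Nat.le_floor hle⟩)
    · intro m hm
      by_contra! hlt
      exact hsq ⟨m, hm, hlt⟩
    · exact fun p q hp hq hlt hpn hqn hdvd => hsucc ⟨p, q, hp, hq, hlt, hpn, hqn, hdvd⟩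
  have hcard := (card_le_card hcover).trans (card_union_le _ _ |>.trans (Nat.add_le_add_right
    (card_union_le _ _ |>.trans (Nat.add_le_add_right (card_union_le _ _) _)) _))
  have hsmall : (#(Icc 1 ⌊x / Real.log x⌋₊) : ℝ) ≤ x * (1 / Real.log x) := by
    rw [Nat.card_Icc, Nat.add_sub_cancel, mul_one_div]
    exact Nat.floor_le (by positivity)
  rw [← Nat.cast_le (α := ℝ)] at hcard
  push_cast at hcard
  linarith [card_exists_sq_dvd_le hN hlog, card_exists_prime_dvd_succ_le hx hN hy,
    card_lt_smoothPart_le hN hy hT]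

/-! ### Choice of parameters -/

/-- The bound `T = x ^ (1 / (16 log log log x))` for the smooth part of a typical integer. The
exponent is such that `T² < d ^ (1 / 4)` whenever `d > x ^ (1 / (2 log log log x))`. -/
noncomputable def smoothBound (x : ℝ) : ℝ :=
  x ^ (1 / (16 * Real.log (Real.log (Real.log x))))

/-- The set of exceptional integers up to `x`, on which the count of `n` with `d ∣ s n` is not
controlled. -/
noncomputable def exceptionalSet (x : ℝ) : Finset ℕ :=
  {n ∈ Icc 1 ⌊x⌋₊ | ¬ IsTypical x (smoothBound x) n}

theorem log_smoothBound {x : ℝ} (hx : 0 < x) :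
    Real.log (smoothBound x) = Real.log x / (16 * Real.log (Real.log (Real.log x))) := by
  rw [smoothBound, Real.log_rpow hx]
  ring

theorem smoothBound_pow {x : ℝ} (hx : 0 ≤ x) (k : ℕ) :
    smoothBound x ^ k = x ^ (k / (16 * Real.log (Real.log (Real.log x)))) := by
  rw [smoothBound, ← Real.rpow_mul_natCast hx]
  ring_nf

theorem card_exceptionalSet_le {x : ℝ} (hx : 1 ≤ x) (hlog : 1 ≤ Real.log x)
    (hlll : 1 ≤ Real.log (Real.log (Real.log x))) :
    (#(exceptionalSet x) : ℝ) ≤ 1355 * x * (Real.log (Real.log x) ^ 3 / Real.log x) := by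
  have hT : 1 < smoothBound x := by
    rw [← Real.log_pos_iff (by rw [smoothBound]; positivity), log_smoothBound (by linarith)]
    positivity
  refine (card_not_isTypical_le hlog hx hT).trans ?_
  rw [log_smoothBound (by linarith), Real.log_pow]
  set l := Real.log x
  set L := Real.log l
  have hlogL : Real.log L ≤ L := Real.log_le_self (Real.log_nonneg hlog)
  have hL : 1 ≤ L := hlll.trans hlogL
  have hsucc : 4 * (1 + l) / l ^ 6 ≤ 8 / l := by
    rw [div_le_div_iff₀ (by positivity) (by positivity)]
    calc 4 * (1 + l) * l ≤ 4 * (l + l) * l := by gcongr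
      _ = 8 * l ^ 2 := by ring
      _ ≤ 8 * l ^ 6 := by gcongr; norm_num
  have hsmooth : 2 * (6 * L) * (1 + 6 * L) / (l / (16 * Real.log L)) ≤ 1344 * (L ^ 3 / l) :=
    calc 2 * (6 * L) * (1 + 6 * L) / (l / (16 * Real.log L))
        = 192 * L * (1 + 6 * L) * Real.log L / l := by field_simp; ring
      _ ≤ 192 * L * (L + 6 * L) * L / l := by gcongr
      _ = 1344 * (L ^ 3 / l) := by ring
  have hinv : 11 / l ≤ 11 * (L ^ 3 / l) := by
    rw [← mul_div_assoc]
    gcongr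
    linarith [one_le_pow₀ hL (n := 3)]
  calc x * (1 / l + 2 / l + 4 * (1 + l) / l ^ 6 +
        2 * ((6 : ℕ) * L) * (1 + (6 : ℕ) * L) / (l / (16 * Real.log L)))
      ≤ x * (1 / l + 2 / l + 8 / l + 1344 * (L ^ 3 / l)) := by
        push_cast
        gcongr
    _ = x * (11 / l + 1344 * (L ^ 3 / l)) := by ring
    _ ≤ x * (11 * (L ^ 3 / l) + 1344 * (L ^ 3 / l)) := by gcongr
    _ = 1355 * x * (L ^ 3 / l) := by ring

theorem tendsto_log_log_atTop : Tendsto (fun x : ℝ => Real.log (Real.log x)) atTop atTop :=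
  Real.tendsto_log_atTop.comp Real.tendsto_log_atTop

theorem isLittleO_card_exceptionalSet :
    (fun x : ℝ => (#(exceptionalSet x) : ℝ)) =o[atTop] fun x : ℝ => x := by
  have hdecay : Tendsto (fun x : ℝ => Real.log (Real.log x) ^ 3 / Real.log x) atTop (nhds 0) :=
    (Real.isLittleO_pow_log_id_atTop (n := 3)).tendsto_div_nhds_zero.comp Real.tendsto_log_atTop
  have hbound : (fun x : ℝ => (#(exceptionalSet x) : ℝ)) =O[atTop]
      fun x => x * (Real.log (Real.log x) ^ 3 / Real.log x) := by
    refine Asymptotics.IsBigO.of_bound 1355 ?_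
    filter_upwards [eventually_ge_atTop 1, Real.tendsto_log_atTop.eventually_ge_atTop 1,
      (Real.tendsto_log_atTop.comp tendsto_log_log_atTop).eventually_ge_atTop 1]
      with x hx hlog hlll
    rw [Real.norm_natCast]
    exact (card_exceptionalSet_le hx hlog hlll).trans ((mul_assoc _ _ _).trans_le
      (mul_le_mul_of_nonneg_left (Real.le_norm_self _) (by norm_num)))
  refine hbound.trans_isLittleO ?_
  simpa only [mul_one] using
    (Asymptotics.isBigO_refl (fun x : ℝ => x) atTop).mul_isLittleO
      ((Asymptotics.isLittleO_one_iff ℝ).2 hdecay)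

theorem eventually_log_pow_le_smoothBound : ∀ᶠ x : ℝ in atTop, Real.log x ^ 10 ≤ smoothBound x := by
  have hsmall : ∀ᶠ x : ℝ in atTop, Real.log (Real.log x) ^ 2 ≤ 1 / 160 * Real.log x := by
    have hlittle := (Real.isLittleO_pow_log_id_atTop (n := 2)).comp_tendsto Real.tendsto_log_atTop
    filter_upwards [hlittle.bound (by norm_num : (0 : ℝ) < 1 / 160),
      Real.tendsto_log_atTop.eventually_ge_atTop 0] with x hx hlog
    simpa [abs_of_nonneg hlog] using hx
  filter_upwards [hsmall, eventually_gt_atTop 0, Real.tendsto_log_atTop.eventually_gt_atTop 0,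
    (Real.tendsto_log_atTop.comp tendsto_log_log_atTop).eventually_gt_atTop 0,
    tendsto_log_log_atTop.eventually_gt_atTop 0] with x hsmall hx hlog hlll hll
  have hT : 0 < smoothBound x := Real.rpow_pos_of_pos hx _
  simp only [Function.comp_apply] at hlll
  rw [← Real.log_le_log_iff (by positivity) hT, Real.log_pow, log_smoothBound hx,
    le_div_iff₀ (by positivity)]
  have hle : Real.log (Real.log (Real.log x)) ≤ Real.log (Real.log x) := Real.log_le_self hll.le
  push_cast
  nlinarith

theorem parameterBounds_of_rpow_lt {x : ℝ} {d : ℕ} (hlog : 2 ≤ Real.log x)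
    (hlll : 1 ≤ Real.log (Real.log (Real.log x))) (hx : 1 ≤ x)
    (hT : Real.log x ^ 10 ≤ smoothBound x)
    (hd : x ^ (1 / (2 * Real.log (Real.log (Real.log x)))) < (d : ℝ)) :
    ParameterBounds x (smoothBound x) ((d : ℝ) ^ ((1 : ℝ) / 4)) d where
  two_le_log := hlog
  log_pow_le := hT
  pow_le := by
    rw [smoothBound_pow (by linarith)]
    refine Real.rpow_le_self_of_one_le hx ?_
    rw [div_le_one (by positivity)]
    push_cast
    linarith
  sq_lt := by
    have hpow : (smoothBound x ^ 2) ^ 4 < d := by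
      rw [← pow_mul, smoothBound_pow (by linarith)]
      convert hd using 2
      push_cast
      field_simp
      norm_num
    have hsq : smoothBound x ^ 2 = ((smoothBound x ^ 2) ^ 4) ^ ((1 : ℝ) / 4) := by
      simpa using (Real.pow_rpow_inv_natCast (sq_nonneg (smoothBound x)) four_ne_zero).symm
    rw [hsq]
    exact Real.rpow_lt_rpow (by positivity) hpow (by norm_num)
  pow_eq := by
    simpa using Real.rpow_inv_natCast_pow (Nat.cast_nonneg (α := ℝ) d) four_ne_zero

theorem div_s_count_bound_large_d_general :
    ∃ C : ℝ, 0 < C ∧ ∃ x₀ : ℝ, ∃ E : ℝ → Finset ℕ,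
      (∀ x : ℝ, x₀ ≤ x → ∀ n ∈ E x, 1 ≤ n ∧ (n : ℝ) ≤ x) ∧
      (fun x : ℝ => ((E x).card : ℝ)) =o[atTop] (fun x : ℝ => x) ∧
      ∀ x : ℝ, x₀ ≤ x → ∀ d : ℕ,
        x ^ (1 / (2 * Real.log (Real.log (Real.log x)))) < (d : ℝ) →
        (((Finset.Icc 1 ⌊x⌋₊).filter (fun n => n ∉ E x ∧ d ∣ s n)).card : ℝ)
          ≤ C * x / ((d : ℝ) ^ ((1 : ℝ) / 4) * Real.log x) := by
  obtain ⟨x₀, hx₀⟩ := eventually_atTop.1 <|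
    (eventually_ge_atTop (1 : ℝ)).and <| (Real.tendsto_log_atTop.eventually_ge_atTop 2).and <|
      ((Real.tendsto_log_atTop.comp tendsto_log_log_atTop).eventually_ge_atTop 1).and
        eventually_log_pow_le_smoothBound
  refine ⟨3, by norm_num, x₀, exceptionalSet, fun x hx n hn => ?_,
    isLittleO_card_exceptionalSet, fun x hx d hd => ?_⟩
  · have hmem := mem_Icc.1 (mem_filter.1 hn).1
    exact ⟨hmem.1, (Nat.le_floor_iff (by linarith [(hx₀ x hx).1])).1 hmem.2⟩
  obtain ⟨hx1, hlog, hlll, hT⟩ := hx₀ x hx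
  rw [mul_div_assoc]
  refine card_typical_dvd_s_le (parameterBounds_of_rpow_lt hlog hlll hx1 hT hd) fun n hn => ?_
  obtain ⟨hn, hnot, hdvd⟩ := mem_filter.1 hn
  exact ⟨by_contra fun h => hnot (mem_filter.2 ⟨hn, h⟩), hdvd⟩

theorem div_s_count_bound_large_d :
    ∃ C : ℝ, 0 < C ∧ ∃ x₀ : ℝ, ∃ E : ℝ → Finset ℕ,
      (∀ x : ℝ, x₀ ≤ x → ∀ n ∈ E x, 1 ≤ n ∧ (n : ℝ) ≤ x) ∧
      (fun x : ℝ => ((E x).card : ℝ)) =o[atTop] (fun x : ℝ => x) ∧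
      ∀ x : ℝ, x₀ ≤ x → ∀ d : ℕ, 0 < d →
        x ^ (1 / (2 * Real.log (Real.log (Real.log x)))) < (d : ℝ) →
        (∀ p : ℕ, p.Prime → p ∣ d → Real.log (Real.log x) < (p : ℝ)) →
        (((Finset.Icc 1 ⌊x⌋₊).filter (fun n => n ∉ E x ∧ d ∣ s n)).card : ℝ)
          ≤ C * x / ((d : ℝ) ^ ((1 : ℝ) / 4) * Real.log x) := by
  obtain ⟨C, hC, x₀, E, hE, hcard, hcount⟩ := div_s_count_bound_large_d_general
  exact ⟨C, hC, x₀, E, hE, hcard, fun x hx d _ hd _ => hcount x hx d hd⟩
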